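/- Let σ, ν ∈ S_n with σ ≤ ν in Bruhat order and let 1 ≤ k < n. Then the intersection of the coset σ(S_k × S_{n-k}) (all permutations μ with {μ(1),...,μ(k)} = {σ(1),...,σ(k)}) with the Bruhat interval [σ, ν] is itself a Bruhat interval; in particular it has a unique maximal element. -/

import Mathlib

/-- Number of inversions (Coxeter length) of a permutation of `Fin n`. -/
def invCount (n : ℕ) (σ : Equiv.Perm (Fin n)) : ℕ :=
  (Finset.univ.filter fun p : Fin n × Fin n => p.1 < p.2 ∧ σ p.2 < σ p.1).card

/-- The simple transposition `sᵢ = (i, i+1)` (and `1` at the out-of-range index). -/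
def sgen (n : ℕ) (i : Fin n) : Equiv.Perm (Fin n) :=
  if h : (i : ℕ) + 1 < n then Equiv.swap i ⟨(i : ℕ) + 1, h⟩ else 1

/-- `l` is a reduced word for `σ`. -/
def IsReducedWord (n : ℕ) (l : List (Fin n)) (σ : Equiv.Perm (Fin n)) : Prop :=
  (∀ i ∈ l, (i : ℕ) + 1 < n) ∧ (l.map (sgen n)).prod = σ ∧ l.length = invCount n σ

/-- The Bruhat order as the subword order on reduced expressions. -/
def bruhatLE (n : ℕ) (μ σ : Equiv.Perm (Fin n)) : Prop :=
  ∃ l l' : List (Fin n), IsReducedWord n l' σ ∧ IsReducedWord n l μ ∧ l.Sublist l'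

namespace BruhatCoset

open Equiv Finset

variable {n : ℕ}

/-- The number of values `≥ q` that `w` takes at positions `< p`. -/
def rank (w : Perm (Fin n)) (p q : ℕ) : ℕ :=
  (univ.filter fun j : Fin n => (w⁻¹ j : ℕ) < p ∧ q ≤ (j : ℕ)).card

/-- The Bruhat order expressed by comparing rank functions. -/
def RankLE (y v : Perm (Fin n)) : Prop := ∀ p q, rank y p q ≤ rank v p q

lemma RankLE.trans {x y z : Perm (Fin n)} (hxy : RankLE x y) (hyz : RankLE y z) : RankLE x z :=
  fun p q => (hxy p q).trans (hyz p q)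

lemma rank_eq_rank_succ_add (w : Perm (Fin n)) (p : ℕ) (j : Fin n) :
    rank w p j = rank w p (j + 1) + if (w⁻¹ j : ℕ) < p then 1 else 0 := by
  unfold rank
  split_ifs with h
  · rw [← card_insert_of_notMem (a := j) (by simp)]
    congr 1
    ext x
    simp only [mem_filter, mem_univ, true_and, mem_insert]
    constructor
    · rintro ⟨h1, h2⟩
      by_cases hx : x = j
      · exact Or.inl hx
      · exact Or.inr ⟨h1, by have := Fin.val_ne_of_ne hx; omega⟩
    · rintro (rfl | ⟨h1, h2⟩)
      · exact ⟨h, le_rfl⟩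
      · exact ⟨h1, by omega⟩
  · rw [add_zero]
    congr 1
    ext x
    simp only [mem_filter, mem_univ, true_and]
    constructor
    · rintro ⟨h1, h2⟩
      have hx : x ≠ j := by rintro rfl; exact h h1
      exact ⟨h1, by have := Fin.val_ne_of_ne hx; omega⟩
    · rintro ⟨h1, h2⟩
      exact ⟨h1, by omega⟩

lemma inv_lt_iff_of_rank_eq {y v : Perm (Fin n)} {p : ℕ} (h : ∀ q, rank y p q = rank v p q)
    (j : Fin n) : (y⁻¹ j : ℕ) < p ↔ (v⁻¹ j : ℕ) < p := by
  have h1 := rank_eq_rank_succ_add y p j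
  have h2 := rank_eq_rank_succ_add v p j
  rw [h, h] at h1
  split_ifs at h1 h2 <;> omega

lemma RankLE.antisymm {y v : Perm (Fin n)} (h1 : RankLE y v) (h2 : RankLE v y) : y = v := by
  have key := fun p => inv_lt_iff_of_rank_eq (fun q => le_antisymm (h1 p q) (h2 p q))
  apply inv_injective
  ext j
  have := key (y⁻¹ j) j
  have := key (v⁻¹ j) j
  omega

lemma inv_swap_mul_apply (w : Perm (Fin n)) (i i' j : Fin n) :
    (swap i i' * w)⁻¹ j = w⁻¹ (swap i i' j) := by
  simp [mul_inv_rev]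

lemma swap_mul_swap_mul (w : Perm (Fin n)) (i i' : Fin n) :
    swap i i' * (swap i i' * w) = w := by
  rw [← mul_assoc, swap_mul_self, one_mul]

lemma rank_swap_mul {i i' : Fin n} (hi : (i' : ℕ) = i + 1) (w : Perm (Fin n)) (p : ℕ) {q : ℕ}
    (hq : q ≠ i') : rank (swap i i' * w) p q = rank w p q := by
  unfold rank
  apply card_bij (fun j _ => swap i i' j)
  · intro j hj
    simp only [mem_filter, mem_univ, true_and, inv_swap_mul_apply] at hj ⊢
    refine ⟨hj.1, ?_⟩
    rcases eq_or_ne j i with rfl | h1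
    · rw [swap_apply_left]; omega
    rcases eq_or_ne j i' with rfl | h2
    · rw [swap_apply_right]; omega
    rw [swap_apply_of_ne_of_ne h1 h2]; exact hj.2
  · intro a _ b _ h
    exact (swap i i').injective h
  · intro j hj
    simp only [mem_filter, mem_univ, true_and, inv_swap_mul_apply] at hj ⊢
    refine ⟨swap i i' j, ⟨by simpa using hj.1, ?_⟩, by simp⟩
    rcases eq_or_ne j i with rfl | h1
    · rw [swap_apply_left]; omega
    rcases eq_or_ne j i' with rfl | h2
    · rw [swap_apply_right]; omega
    rw [swap_apply_of_ne_of_ne h1 h2]; exact hj.2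

lemma rankLE_of_swap_mul_rankLE_swap_mul {i i' : Fin n} (hi : (i' : ℕ) = i + 1)
    {y v : Perm (Fin n)} (hv : v⁻¹ i' < v⁻¹ i)
    (h : RankLE (swap i i' * y) (swap i i' * v)) : RankLE y v := by
  intro p q
  by_cases hq : q = i'
  · subst hq
    have hy2 := rank_eq_rank_succ_add y p i'
    have hv2 := rank_eq_rank_succ_add v p i'
    have hy1 := rank_eq_rank_succ_add y p i
    have hv1 := rank_eq_rank_succ_add v p i
    have h1 := h p i
    have h2 := h p (i' + 1)
    rw [rank_swap_mul hi _ _ (by omega), rank_swap_mul hi _ _ (by omega)] at h1 h2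
    rw [← hi] at hy1 hv1
    rw [Fin.lt_def] at hv
    split_ifs at * <;> omega
  · have := h p q
    rwa [rank_swap_mul hi _ _ hq, rank_swap_mul hi _ _ hq] at this

lemma swap_mul_rankLE_self {i i' : Fin n} (hi : (i' : ℕ) = i + 1)
    {v : Perm (Fin n)} (hv : v⁻¹ i' < v⁻¹ i) : RankLE (swap i i' * v) v := by
  intro p q
  by_cases hq : q = i'
  · subst hq
    have h2 := rank_eq_rank_succ_add v p i'
    have h1 := rank_eq_rank_succ_add (swap i i' * v) p i'
    rw [rank_swap_mul hi v p (q := i' + 1) (by omega), inv_swap_mul_apply, swap_apply_right] at h1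
    rw [Fin.lt_def] at hv
    split_ifs at * <;> omega
  · rw [rank_swap_mul hi _ _ hq]

lemma rankLE_swap_mul {i i' : Fin n} (hi : (i' : ℕ) = i + 1) {y v : Perm (Fin n)}
    (hy : y⁻¹ i < y⁻¹ i') (h : RankLE y v) :
    RankLE y (swap i i' * v) := by
  intro p q
  by_cases hq : q = i'
  · subst hq
    have hy2 := rank_eq_rank_succ_add y p i'
    have hv2 := rank_eq_rank_succ_add v p i'
    have hy1 := rank_eq_rank_succ_add y p i
    have hv1 := rank_eq_rank_succ_add v p i
    have hsv := rank_eq_rank_succ_add (swap i i' * v) p i'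
    have h1 := h p i
    have h2 := h p (i' + 1)
    rw [rank_swap_mul hi v p (q := i' + 1) (by omega), inv_swap_mul_apply, swap_apply_right] at hsv
    rw [← hi] at hy1 hv1
    rw [Fin.lt_def] at hy
    split_ifs at * <;> omega
  · rw [rank_swap_mul hi _ _ hq]
    exact h p q

lemma inv_lt_inv_swap_mul_iff (i i' : Fin n) (w : Perm (Fin n)) :
    (swap i i' * w)⁻¹ i' < (swap i i' * w)⁻¹ i ↔ w⁻¹ i < w⁻¹ i' := by
  rw [inv_swap_mul_apply, inv_swap_mul_apply, swap_apply_left, swap_apply_right]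

lemma inv_lt_inv_swap_mul_iff' (i i' : Fin n) (w : Perm (Fin n)) :
    (swap i i' * w)⁻¹ i < (swap i i' * w)⁻¹ i' ↔ w⁻¹ i' < w⁻¹ i := by
  rw [inv_swap_mul_apply, inv_swap_mul_apply, swap_apply_left, swap_apply_right]

/-- Lifting property, when the smaller element has no descent at `i`. -/
lemma rankLE_iff_rankLE_swap_mul {i i' : Fin n} (hi : (i' : ℕ) = i + 1) {y v : Perm (Fin n)}
    (hv : v⁻¹ i' < v⁻¹ i) (hy : y⁻¹ i < y⁻¹ i') : RankLE y v ↔ RankLE y (swap i i' * v) :=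
  ⟨rankLE_swap_mul hi hy, fun h => h.trans (swap_mul_rankLE_self hi hv)⟩

/-- Lifting property, when both elements have a descent at `i`. -/
lemma rankLE_iff_swap_mul_rankLE_swap_mul {i i' : Fin n} (hi : (i' : ℕ) = i + 1)
    {y v : Perm (Fin n)} (hv : v⁻¹ i' < v⁻¹ i) (hy : y⁻¹ i' < y⁻¹ i) :
    RankLE y v ↔ RankLE (swap i i' * y) (swap i i' * v) :=
  ⟨fun h => rankLE_swap_mul hi ((inv_lt_inv_swap_mul_iff' i i' y).2 hy)
      ((swap_mul_rankLE_self hi hy).trans h),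
    rankLE_of_swap_mul_rankLE_swap_mul hi hv⟩

lemma invCount_swap_mul_of_lt {i i' : Fin n} (hi : (i' : ℕ) = i + 1) {w : Perm (Fin n)}
    (hw : w⁻¹ i < w⁻¹ i') : invCount n (swap i i' * w) = invCount n w + 1 := by
  have hinv : ∀ x, w (w⁻¹ x) = x := w.apply_symm_apply
  unfold invCount
  rw [← card_insert_of_notMem (a := (w⁻¹ i, w⁻¹ i'))
    (by simp only [mem_filter, hinv, Fin.lt_def]; omega)]
  congr 1
  ext ⟨a, b⟩
  obtain ⟨x, rfl⟩ := (w⁻¹).surjective a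
  obtain ⟨z, rfl⟩ := (w⁻¹).surjective b
  simp only [mem_filter, mem_univ, true_and, mem_insert, Prod.mk.injEq, Perm.mul_apply,
    hinv, EmbeddingLike.apply_eq_iff_eq, swap_apply_def, Fin.ext_iff, Fin.lt_def]
  have hz : (z : ℕ) = i → z = i := Fin.ext
  have hz' : (z : ℕ) = i' → z = i' := Fin.ext
  have hx : (x : ℕ) = i → x = i := Fin.ext
  have hx' : (x : ℕ) = i' → x = i' := Fin.ext
  rw [Fin.lt_def] at hw
  split_ifs <;> grind

lemma invCount_of_descent {i i' : Fin n} (hi : (i' : ℕ) = i + 1) {w : Perm (Fin n)}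
    (hw : w⁻¹ i' < w⁻¹ i) : invCount n w = invCount n (swap i i' * w) + 1 := by
  have := invCount_swap_mul_of_lt hi ((inv_lt_inv_swap_mul_iff' i i' w).2 hw)
  rwa [swap_mul_swap_mul] at this

lemma inv_lt_or_lt {i i' : Fin n} (hi : (i' : ℕ) = i + 1) (w : Perm (Fin n)) :
    w⁻¹ i < w⁻¹ i' ∨ w⁻¹ i' < w⁻¹ i := by
  apply lt_or_gt_of_ne
  intro h
  have := (w⁻¹).injective h
  omega

lemma exists_descent {w : Perm (Fin n)} (hw : w ≠ 1) :
    ∃ i i' : Fin n, (i' : ℕ) = i + 1 ∧ w⁻¹ i' < w⁻¹ i := by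
  by_contra! hcon
  apply hw
  obtain _ | m := n
  · exact Subsingleton.elim _ _
  have hmono : StrictMono (w⁻¹ : Perm (Fin (m + 1))) := by
    rw [Fin.strictMono_iff_lt_succ]
    intro i
    refine lt_of_le_of_ne (hcon _ _ (by simp)) fun h => ?_
    exact (Fin.castSucc_lt_succ (i := i)).ne ((w⁻¹).injective h)
  have : (w⁻¹ : Perm (Fin (m + 1))) = 1 := by
    apply DFunLike.coe_injective
    exact hmono.eq_id
  simpa using this

/-- Induction along descents in the left weak order. -/
lemma descent_induction {P : Perm (Fin n) → Prop} (one : P 1)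
    (step : ∀ (w : Perm (Fin n)) (i i' : Fin n), (i' : ℕ) = i + 1 → w⁻¹ i' < w⁻¹ i →
      P (swap i i' * w) → P w) (w : Perm (Fin n)) : P w := by
  induction h : invCount n w using Nat.strong_induction_on generalizing w with
  | _ m ih =>
    by_cases hw : w = 1
    · rwa [hw]
    obtain ⟨i, i', hi, hd⟩ := exists_descent hw
    have := invCount_of_descent hi hd
    exact step w i i' hi hd (ih _ (by omega) _ rfl)

lemma one_rankLE (w : Perm (Fin n)) : RankLE 1 w := by
  induction w using descent_induction with
  | one => exact fun _ _ => le_rfl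
  | step w i i' hi hd ih => exact ih.trans (swap_mul_rankLE_self hi hd)

lemma sgen_eq_swap {i i' : Fin n} (hi : (i' : ℕ) = i + 1) : sgen n i = swap i i' := by
  have h : (i : ℕ) + 1 < n := hi ▸ i'.2
  rw [sgen, dif_pos h]
  congr 1
  exact Fin.ext hi.symm

lemma invCount_one : invCount n 1 = 0 := by
  simp only [invCount, card_eq_zero, filter_eq_empty_iff]
  rintro ⟨a, b⟩ _ ⟨h1, h2⟩
  exact lt_asymm h1 h2

lemma isReducedWord_nil : IsReducedWord n [] 1 :=
  ⟨by simp, by simp, by simp [invCount_one]⟩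

lemma isReducedWord_cons {i i' : Fin n} (hi : (i' : ℕ) = i + 1) {w : Perm (Fin n)}
    (hw : w⁻¹ i' < w⁻¹ i) {l : List (Fin n)} (hl : IsReducedWord n l (swap i i' * w)) :
    IsReducedWord n (i :: l) w := by
  refine ⟨?_, ?_, ?_⟩
  · rintro j hj
    rcases List.mem_cons.1 hj with rfl | hj
    · exact hi ▸ i'.2
    · exact hl.1 j hj
  · rw [List.map_cons, List.prod_cons, hl.2.1, sgen_eq_swap hi, swap_mul_swap_mul]
  · rw [List.length_cons, hl.2.2, invCount_of_descent hi hw]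

lemma invCount_prod_le {l : List (Fin n)} (hl : ∀ i ∈ l, (i : ℕ) + 1 < n) :
    invCount n (l.map (sgen n)).prod ≤ l.length := by
  induction l with
  | nil => simp [invCount_one]
  | cons i l ih =>
    have ih := ih fun j hj => hl j (List.mem_cons_of_mem _ hj)
    obtain ⟨i', hi⟩ : ∃ i' : Fin n, (i' : ℕ) = i + 1 := ⟨⟨i + 1, hl i List.mem_cons_self⟩, rfl⟩
    rw [List.map_cons, List.prod_cons, sgen_eq_swap hi, List.length_cons]
    rcases inv_lt_or_lt hi (l.map (sgen n)).prod with h | h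
    · have := invCount_swap_mul_of_lt hi h
      omega
    · have := invCount_of_descent hi h
      omega

lemma IsReducedWord.of_cons {i : Fin n} {l : List (Fin n)} {w : Perm (Fin n)}
    (h : IsReducedWord n (i :: l) w) :
    ∃ i' : Fin n, (i' : ℕ) = i + 1 ∧ w⁻¹ i' < w⁻¹ i ∧ IsReducedWord n l (swap i i' * w) := by
  obtain ⟨h1, rfl, h3⟩ := h
  have hl : ∀ j ∈ l, (j : ℕ) + 1 < n := fun j hj => h1 j (List.mem_cons_of_mem _ hj)
  obtain ⟨i', hi⟩ : ∃ i' : Fin n, (i' : ℕ) = i + 1 := ⟨⟨i + 1, h1 i List.mem_cons_self⟩, rfl⟩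
  have hle := invCount_prod_le hl
  rw [List.map_cons, List.prod_cons, sgen_eq_swap hi, List.length_cons] at h3
  rw [List.map_cons, List.prod_cons, sgen_eq_swap hi]
  refine ⟨i', hi, ?_, ?_⟩
  · rw [inv_lt_inv_swap_mul_iff]
    rcases inv_lt_or_lt hi (l.map (sgen n)).prod with h | h
    · exact h
    · have := invCount_of_descent hi h
      omega
  · rw [swap_mul_swap_mul]
    refine ⟨hl, rfl, ?_⟩
    rcases inv_lt_or_lt hi (l.map (sgen n)).prod with h | h
    · have := invCount_swap_mul_of_lt hi h
      omega
    · have := invCount_of_descent hi h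
      omega

lemma rankLE_of_sublist {l l' : List (Fin n)} (h : l.Sublist l') :
    ∀ {y v : Perm (Fin n)}, IsReducedWord n l y → IsReducedWord n l' v → RankLE y v := by
  induction h with
  | slnil =>
    rintro y v ⟨-, rfl, -⟩ ⟨-, rfl, -⟩
    exact fun _ _ => le_rfl
  | cons i _ ih =>
    intro y v hy hv
    obtain ⟨i', hi, hd, hv'⟩ := IsReducedWord.of_cons hv
    exact (ih hy hv').trans (swap_mul_rankLE_self hi hd)
  | cons_cons i _ ih =>
    intro y v hy hv
    obtain ⟨i', hi, -, hy'⟩ := IsReducedWord.of_cons hy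
    obtain ⟨j', hj, hdv, hv'⟩ := IsReducedWord.of_cons hv
    obtain rfl : i' = j' := Fin.ext (hi.trans hj.symm)
    exact rankLE_of_swap_mul_rankLE_swap_mul hi hdv (ih hy' hv')

lemma bruhatLE_of_rankLE {y v : Perm (Fin n)} (h : RankLE y v) : bruhatLE n y v := by
  induction v using descent_induction generalizing y with
  | one =>
    rw [h.antisymm (one_rankLE y)]
    exact ⟨[], [], isReducedWord_nil, isReducedWord_nil, List.Sublist.refl _⟩
  | step v i i' hi hd ih =>
    rcases inv_lt_or_lt hi y with hy | hy
    · obtain ⟨l, l', hl', hl, hs⟩ := ih ((rankLE_iff_rankLE_swap_mul hi hd hy).1 h)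
      exact ⟨l, i :: l', isReducedWord_cons hi hd hl', hl, hs.cons i⟩
    · obtain ⟨l, l', hl', hl, hs⟩ := ih ((rankLE_iff_swap_mul_rankLE_swap_mul hi hd hy).1 h)
      exact ⟨i :: l, i :: l', isReducedWord_cons hi hd hl', isReducedWord_cons hi hy hl,
        hs.cons_cons i⟩

/-- The subword order agrees with the comparison of rank functions. -/
lemma bruhatLE_iff_rankLE {y v : Perm (Fin n)} : bruhatLE n y v ↔ RankLE y v :=
  ⟨fun ⟨_, _, hl', hl, hs⟩ => rankLE_of_sublist hs hl hl', bruhatLE_of_rankLE⟩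

/-- The set of permutations whose values at the first `k` positions form the set `A`. -/
def cosetOf (k : ℕ) (A : Set (Fin n)) : Set (Perm (Fin n)) :=
  {w | ∀ j, (w⁻¹ j : ℕ) < k ↔ j ∈ A}

lemma swap_mul_mem_cosetOf {k : ℕ} {A : Set (Fin n)} {i i' : Fin n} {w : Perm (Fin n)} :
    swap i i' * w ∈ cosetOf k A ↔ w ∈ cosetOf k (swap i i' ⁻¹' A) := by
  constructor
  · intro h j
    have := h (swap i i' j)
    rwa [inv_swap_mul_apply, swap_apply_self] at this
  · intro h j
    have := h (swap i i' j)
    rwa [Set.mem_preimage, swap_apply_self, ← inv_swap_mul_apply] at this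

/-- The elements below `v` in a coset of a maximal parabolic subgroup are the elements of the
coset below some `η` in it. -/
lemma exists_max_cosetOf (k : ℕ) (v : Perm (Fin n)) (A : Set (Fin n)) {x : Perm (Fin n)}
    (hx : x ∈ cosetOf k A) (hxv : RankLE x v) :
    ∃ η ∈ cosetOf k A, ∀ y ∈ cosetOf k A, RankLE y v ↔ RankLE y η := by
  induction v using descent_induction generalizing A x with
  | one =>
    obtain rfl := hxv.antisymm (one_rankLE x)
    exact ⟨1, hx, fun _ _ => Iff.rfl⟩
  | step v i i' hi hd ih =>
    by_cases hA : i ∈ A ↔ i' ∈ A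
    · have hstable : swap i i' ⁻¹' A = A := by
        ext j
        rw [Set.mem_preimage, swap_apply_def]
        split_ifs with h1 h2
        · rw [h1, hA]
        · rw [h2, hA]
        · rfl
      -- The coset is stable under left multiplication by the simple transposition.
      have hmem : ∀ w : Perm (Fin n), swap i i' * w ∈ cosetOf k A ↔ w ∈ cosetOf k A := by
        intro w
        rw [swap_mul_mem_cosetOf, hstable]
      obtain ⟨x', hx', hxv'⟩ : ∃ x' ∈ cosetOf k A, RankLE x' (swap i i' * v) := by
        rcases inv_lt_or_lt hi x with h | h
        · exact ⟨x, hx, (rankLE_iff_rankLE_swap_mul hi hd h).1 hxv⟩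
        · exact ⟨_, (hmem x).2 hx, (rankLE_iff_swap_mul_rankLE_swap_mul hi hd h).1 hxv⟩
      obtain ⟨η, hη, hmax⟩ := ih A hx' hxv'
      rcases inv_lt_or_lt hi η with hdη | hdη
      · have hdη' := (inv_lt_inv_swap_mul_iff i i' η).2 hdη
        refine ⟨swap i i' * η, (hmem η).2 hη, fun y hy => ?_⟩
        rcases inv_lt_or_lt hi y with h | h
        · rw [rankLE_iff_rankLE_swap_mul hi hd h, rankLE_iff_rankLE_swap_mul hi hdη' h,
            swap_mul_swap_mul, hmax y hy]
        · rw [rankLE_iff_swap_mul_rankLE_swap_mul hi hd h,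
            rankLE_iff_swap_mul_rankLE_swap_mul hi hdη' h,
            swap_mul_swap_mul, hmax _ ((hmem y).2 hy)]
      · refine ⟨η, hη, fun y hy => ?_⟩
        rcases inv_lt_or_lt hi y with h | h
        · rw [rankLE_iff_rankLE_swap_mul hi hd h, hmax y hy]
        · rw [rankLE_iff_swap_mul_rankLE_swap_mul hi hd h, hmax _ ((hmem y).2 hy),
            rankLE_iff_swap_mul_rankLE_swap_mul hi hdη h,
            rankLE_iff_rankLE_swap_mul hi hdη ((inv_lt_inv_swap_mul_iff' i i' y).2 h)]
    · by_cases hiA : i ∈ A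
      · -- No element of the coset has a descent at `i`.
        have hi'A : i' ∉ A := fun h => hA ⟨fun _ => h, fun _ => hiA⟩
        have hasc : ∀ y ∈ cosetOf k A, y⁻¹ i < y⁻¹ i' := by
          intro y hy
          have h1 := (hy i).2 hiA
          have h2 := mt (hy i').1 hi'A
          rw [Fin.lt_def]
          omega
        obtain ⟨η, hη, hmax⟩ := ih A hx ((rankLE_iff_rankLE_swap_mul hi hd (hasc x hx)).1 hxv)
        exact ⟨η, hη, fun y hy =>
          (rankLE_iff_rankLE_swap_mul hi hd (hasc y hy)).trans (hmax y hy)⟩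
      · -- Every element of the coset has a descent at `i`.
        have hi'A : i' ∈ A := by tauto
        have hdesc : ∀ y ∈ cosetOf k A, y⁻¹ i' < y⁻¹ i := by
          intro y hy
          have h1 := (hy i').2 hi'A
          have h2 := mt (hy i).1 hiA
          rw [Fin.lt_def]
          omega
        have hmem : ∀ y ∈ cosetOf k A, swap i i' * y ∈ cosetOf k (swap i i' ⁻¹' A) := by
          intro y hy
          rwa [← swap_mul_mem_cosetOf, swap_mul_swap_mul]
        obtain ⟨η, hη, hmax⟩ := ih _ (hmem x hx)
          ((rankLE_iff_swap_mul_rankLE_swap_mul hi hd (hdesc x hx)).1 hxv)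
        have hη' := swap_mul_mem_cosetOf.2 hη
        refine ⟨swap i i' * η, hη', fun y hy => ?_⟩
        rw [rankLE_iff_swap_mul_rankLE_swap_mul hi hd (hdesc y hy), hmax _ (hmem y hy),
          rankLE_iff_swap_mul_rankLE_swap_mul hi (hdesc _ hη') (hdesc y hy), swap_mul_swap_mul]

/-- Cosets of a maximal parabolic subgroup are convex for the Bruhat order. -/
lemma mem_cosetOf_of_rankLE {k : ℕ} {A : Set (Fin n)} {x y z : Perm (Fin n)}
    (hx : x ∈ cosetOf k A) (hz : z ∈ cosetOf k A) (hxy : RankLE x y) (hyz : RankLE y z) :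
    y ∈ cosetOf k A := by
  have hxz : ∀ q, rank x k q = rank z k q := by
    intro q
    unfold rank
    congr 1
    ext j
    rw [mem_filter, mem_filter, hx j, hz j]
  intro j
  rw [← hx j]
  refine inv_lt_iff_of_rank_eq (fun q => le_antisymm ?_ (hxy k q)) j
  rw [hxz q]
  exact hyz k q

lemma image_eq_iff_mem_cosetOf {k : ℕ} {A : Set (Fin n)} {w : Perm (Fin n)} :
    w '' {i : Fin n | (i : ℕ) < k} = A ↔ w ∈ cosetOf k A := by
  rw [Equiv.image_eq_preimage_symm, Set.ext_iff]
  rfl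

end BruhatCoset

/-- For `σ ≤ ν` in Bruhat order and `1 ≤ k < n`, the intersection of
the coset `σ(S_k × S_{n-k})` — all `μ` whose first `k` values form the same set as
those of `σ` — with the Bruhat interval `[σ, ν]` is itself a Bruhat interval `[σ, η]`;
in particular it has a unique maximal element. -/
theorem coset_inter_interval (n k : ℕ) (hk1 : 1 ≤ k) (hk : k < n)
    (σ ν : Equiv.Perm (Fin n)) (hσν : bruhatLE n σ ν) :
    ∃ η : Equiv.Perm (Fin n),
      {μ : Equiv.Perm (Fin n) | bruhatLE n σ μ ∧ bruhatLE n μ ν ∧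
          (⇑μ) '' {i : Fin n | (i : ℕ) < k} = (⇑σ) '' {i : Fin n | (i : ℕ) < k}}
        = {μ : Equiv.Perm (Fin n) | bruhatLE n σ μ ∧ bruhatLE n μ η} := by
  simp only [BruhatCoset.bruhatLE_iff_rankLE, BruhatCoset.image_eq_iff_mem_cosetOf] at hσν ⊢
  have hσ := BruhatCoset.image_eq_iff_mem_cosetOf.1
    (rfl : σ '' {i : Fin n | (i : ℕ) < k} = σ '' {i : Fin n | (i : ℕ) < k})
  obtain ⟨η, hη, hmax⟩ := BruhatCoset.exists_max_cosetOf k ν _ hσ hσν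
  refine ⟨η, Set.ext fun μ => ⟨fun ⟨h1, h2, h3⟩ => ⟨h1, (hmax μ h3).1 h2⟩, fun ⟨h1, h2⟩ => ?_⟩⟩
  have h3 := BruhatCoset.mem_cosetOf_of_rankLE hσ hη h1 h2
  exact ⟨h1, (hmax μ h3).2 h2, h3⟩
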